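/- Let α, β ≥ -1/2. There exists a constant C depending only on α and β such that for all θ, φ ∈ (0,π) with θ ≠ φ one has sup_{t>0} H̃_t^{α,β}(θ,φ) ≤ C / μ_{α,β}^+(B(θ, |θ-φ|)). -/

import Mathlib

open MeasureTheory Real Set

noncomputable section

/-- The Jacobi measure `μ_{α,β}^+` on `(0,π)`: density
`(sin(θ/2))^(2α+1) (cos(θ/2))^(2β+1)` w.r.t. Lebesgue measure on `(0,π)`. -/
def jacobiMeasure (α β : ℝ) : Measure ℝ :=
  (volume.restrict (Ioo 0 π)).withDensity
    (fun θ => ENNReal.ofReal (Real.sin (θ / 2) ^ (2 * α + 1) * Real.cos (θ / 2) ^ (2 * β + 1)))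

/-- The ball `B(θ,r) = (θ-r, θ+r) ∩ (0,π)`. -/
def jacobiBall (θ r : ℝ) : Set ℝ := Ioo (θ - r) (θ + r) ∩ Ioo 0 π

/-- The measure `Π_α` on `[-1,1]`. -/
def PiMeasure (α : ℝ) : Measure ℝ :=
  if α = -(1 / 2) then (2 : ENNReal)⁻¹ • (Measure.dirac (-1) + Measure.dirac 1)
  else
    (volume.restrict (Icc (-1) 1)).withDensity
      (fun u => ENNReal.ofReal
        (Real.Gamma (α + 1) / (Real.sqrt π * Real.Gamma (α + 1 / 2)) * (1 - u ^ 2) ^ (α - 1 / 2)))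

/-- `q(θ,φ,u,v) = 1 - u sin(θ/2) sin(φ/2) - v cos(θ/2) cos(φ/2)`. -/
def qfun (θ φ u v : ℝ) : ℝ :=
  1 - u * Real.sin (θ / 2) * Real.sin (φ / 2) - v * Real.cos (θ / 2) * Real.cos (φ / 2)

/-- `Ψ^{α,β}(t,s) = sinh(t/2) / (cosh(t/2) - 1 + s)^(α+β+2)`. -/
def Psi (α β t s : ℝ) : ℝ :=
  Real.sinh (t / 2) / (Real.cosh (t / 2) - 1 + s) ^ (α + β + 2)

/-- The Jacobi-Poisson kernel `H_t^{α,β}(θ,φ)`. -/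
def Hker (α β t θ φ : ℝ) : ℝ :=
  ((2 : ℝ) ^ (-(α + β + 2)) / (jacobiMeasure α β (Ioo 0 π)).toReal) * Real.sinh (t / 2) *
    ∫ u, ∫ v, 1 / (Real.cosh (t / 2) - 1 + qfun θ φ u v) ^ (α + β + 2)
      ∂(PiMeasure β) ∂(PiMeasure α)

/-- The symmetrized kernel `H̃_t^{α,β}(θ,φ) = (1/4) sin θ sin φ H_t^{α+1,β+1}(θ,φ)`. -/
def Htilde (α β t θ φ : ℝ) : ℝ :=
  (1 / 4) * Real.sin θ * Real.sin φ * Hker (α + 1) (β + 1) t θ φ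

end

/-!
Write `a = sin (θ/2) sin (φ/2)`, `b = cos (θ/2) cos (φ/2)` and
`δ = q(θ,φ,1,1) = 1 - a - b = 1 - cos ((θ-φ)/2)`, which is comparable to `|θ-φ|²`. The denominator
of the kernel is `D + a(1-u) + b(1-v)` with `D = cosh (t/2) - 1 + δ`, so it dominates both
`D + a(1-u)` and `D + b(1-v)`; distributing the exponent over these two factors decouples the double
integral into two one-dimensional ones. Each of them is controlled by
`(1-u²)/(D + a(1-u)) ≤ 2/(a+D)`, and the product of the factors `a` and `b` with the two integrals
is at most a constant times `(a+D)^(-α-1/2) (b+D)^(-β-1/2) / D`. As `sinh (t/2) / D ≤ 1/√δ`,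
replacing `D` by `δ` in the other factors removes `t`, and what is left is the reciprocal of
`(a+δ)^(α+1/2) (b+δ)^(β+1/2) √δ`, which dominates the measure of `B(θ,|θ-φ|)`.
-/

theorem integral_integral_le_mul_of_le_mul {X Y : Type*} [MeasurableSpace X] [MeasurableSpace Y]
    {μ : Measure X} {ν : Measure Y} {F : X → Y → ℝ} {f : X → ℝ} {g : Y → ℝ}
    (hF : ∀ᵐ x ∂μ, ∀ᵐ y ∂ν, 0 ≤ F x y) (hFfg : ∀ᵐ x ∂μ, ∀ᵐ y ∂ν, F x y ≤ f x * g y)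
    (hf : Integrable f μ) (hg : Integrable g ν) :
    ∫ x, ∫ y, F x y ∂ν ∂μ ≤ (∫ x, f x ∂μ) * ∫ y, g y ∂ν := by
  rw [← integral_mul_const]
  refine integral_mono_of_nonneg (hF.mono fun x hx => integral_nonneg_of_ae hx)
    (hf.mul_const _) ?_
  filter_upwards [hF, hFfg] with x hx hxfg
  rw [← integral_const_mul]
  exact integral_mono_of_nonneg hx (hg.const_mul _) hxfg

section PowerEstimates

variable {a b D p s u v : ℝ}

theorem add_mul_one_sub_pos (ha : 0 ≤ a) (hD : 0 < D) (hu : u ∈ Icc (-1 : ℝ) 1) :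
    0 < D + a * (1 - u) :=
  add_pos_of_pos_of_nonneg hD (mul_nonneg ha (sub_nonneg.2 hu.2))

theorem continuousOn_add_mul_one_sub_rpow (ha : 0 ≤ a) (hD : 0 < D) (p : ℝ) :
    ContinuousOn (fun u : ℝ => (D + a * (1 - u)) ^ p) (Icc (-1) 1) :=
  ContinuousOn.rpow_const (by fun_prop) fun _ hu => Or.inl (add_mul_one_sub_pos ha hD hu).ne'

theorem mul_integral_add_mul_one_sub_rpow_neg_le (ha : 0 ≤ a) (hD : 0 < D) (hp : 1 < p) :
    a * ∫ u in Icc (-1 : ℝ) 1, (D + a * (1 - u)) ^ (-p) ≤ D ^ (1 - p) / (p - 1) := by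
  have zero_notMem : (0 : ℝ) ∉ uIcc D (D + 2 * a) := by
    rw [uIcc_of_le (by linarith)]
    exact fun h => hD.not_ge h.1
  have substitution : a * ∫ u in Icc (-1 : ℝ) 1, (D + a * (1 - u)) ^ (-p)
      = ∫ x in D..D + 2 * a, x ^ (-p) := by
    have base_eq (u : ℝ) : D + a * (1 - u) = D + a - a * u := by ring
    simp only [base_eq]
    rw [integral_Icc_eq_integral_Ioc, ← intervalIntegral.integral_of_le (by norm_num),
      intervalIntegral.mul_integral_comp_sub_mul (f := fun x : ℝ => x ^ (-p)) a (D + a)]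
    congr 1 <;> ring
  have antiderivative : ∫ x in D..D + 2 * a, x ^ (-p)
      = (D ^ (1 - p) - (D + 2 * a) ^ (1 - p)) / (p - 1) := by
    rw [integral_rpow (Or.inr ⟨by linarith, zero_notMem⟩), neg_add_eq_sub, ← neg_div_neg_eq]
    ring
  rw [substitution, antiderivative]
  have : 0 ≤ (D + 2 * a) ^ (1 - p) := by positivity
  gcongr
  linarith

theorem one_sub_sq_rpow_mul_rpow_neg_le (ha : 0 ≤ a) (hD : 0 < D) (hs : 0 ≤ s)
    (hu : u ∈ Icc (-1 : ℝ) 1) :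
    (1 - u ^ 2) ^ s * (D + a * (1 - u)) ^ (-s) ≤ 2 ^ s * (a + D) ^ (-s) := by
  have hE := add_mul_one_sub_pos ha hD hu
  have haD : 0 < a + D := by positivity
  have hu2 : 0 ≤ 1 - u ^ 2 := by nlinarith only [hu.1, hu.2]
  have ratio_le : (1 - u ^ 2) / (D + a * (1 - u)) ≤ 2 / (a + D) := by
    rw [div_le_div_iff₀ hE haD]
    have near_one : a * (1 - u ^ 2) ≤ a * (2 * (1 - u)) :=
      mul_le_mul_of_nonneg_left (by nlinarith only [hu.1, hu.2]) ha
    have bounded : D * (1 - u ^ 2) ≤ D * 2 :=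
      mul_le_mul_of_nonneg_left (by nlinarith only [sq_nonneg u]) hD.le
    linarith
  rw [rpow_neg hE.le, rpow_neg haD.le, ← div_eq_mul_inv, ← div_eq_mul_inv,
    ← div_rpow hu2 hE.le, ← div_rpow zero_le_two haD.le]
  exact rpow_le_rpow (by positivity) ratio_le hs

theorem one_div_rpow_add_le_mul (ha : 0 ≤ a) (hb : 0 ≤ b) (hD : 0 < D) (hp : 0 ≤ p) (hs : 0 ≤ s)
    (hu : u ∈ Icc (-1 : ℝ) 1) (hv : v ∈ Icc (-1 : ℝ) 1) :
    1 / (D + a * (1 - u) + b * (1 - v)) ^ (p + s)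
      ≤ (D + a * (1 - u)) ^ (-p) * (D + b * (1 - v)) ^ (-s) := by
  have hau : 0 ≤ a * (1 - u) := mul_nonneg ha (sub_nonneg.2 hu.2)
  have hbv : 0 ≤ b * (1 - v) := mul_nonneg hb (sub_nonneg.2 hv.2)
  have hDu := add_mul_one_sub_pos ha hD hu
  have hDv := add_mul_one_sub_pos hb hD hv
  have hDuv := add_mul_one_sub_pos hb hDu hv
  rw [one_div, ← rpow_neg hDuv.le, neg_add, rpow_add hDuv]
  gcongr ?_ * ?_
  · exact rpow_le_rpow_of_nonpos hDu (by linarith) (by linarith)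
  · exact rpow_le_rpow_of_nonpos hDv (by linarith) (by linarith)

theorem sinh_div_le_one_div_sqrt (x : ℝ) {δ : ℝ} (hδ : 0 < δ) (hδ1 : δ ≤ 1) :
    sinh x / (cosh x - 1 + δ) ≤ 1 / √δ := by
  have hT : 0 ≤ cosh x - 1 := sub_nonneg.2 (one_le_cosh x)
  rw [div_le_div_iff₀ (by positivity) (sqrt_pos.2 hδ), one_mul]
  refine le_of_sq_le_sq ?_ (by positivity)
  calc (sinh x * √δ) ^ 2 = (cosh x - 1) ^ 2 * δ + 2 * (cosh x - 1) * δ := by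
        rw [mul_pow, sq_sqrt hδ.le, sinh_sq]; ring
    _ ≤ (cosh x - 1) ^ 2 * 1 + 2 * (cosh x - 1) * δ := by gcongr
    _ ≤ (cosh x - 1 + δ) ^ 2 := by nlinarith only [sq_nonneg δ]

end PowerEstimates

section PiMeasure

/-- The normalizing constant of `Π_α`. -/
noncomputable def piConst (α : ℝ) : ℝ := Gamma (α + 1) / (√π * Gamma (α + 1 / 2))

/-- The density of `Π_α` on `[-1,1]`, for `α > -1/2`. -/
noncomputable def piDensity (α u : ℝ) : ℝ := piConst α * (1 - u ^ 2) ^ (α - 1 / 2)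

variable {α u : ℝ}

theorem piConst_pos (hα : -(1 / 2) < α) : 0 < piConst α := by
  have : 0 < Gamma (α + 1) := Gamma_pos_of_pos (by linarith)
  have : 0 < Gamma (α + 1 / 2) := Gamma_pos_of_pos (by linarith)
  unfold piConst
  positivity

theorem piDensity_nonneg (hα : -(1 / 2) < α) (hu : u ∈ Icc (-1 : ℝ) 1) : 0 ≤ piDensity α u :=
  mul_nonneg (piConst_pos hα).le (rpow_nonneg (by nlinarith only [hu.1, hu.2]) _)

theorem measurable_piDensity (α : ℝ) : Measurable (piDensity α) := by
  unfold piDensity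
  fun_prop

theorem continuous_piDensity (hα : 1 / 2 ≤ α) : Continuous (piDensity α) :=
  continuous_const.mul (Continuous.rpow_const (by fun_prop) fun _ => Or.inr (sub_nonneg.2 hα))

theorem piMeasure_eq_withDensity (hα : α ≠ -(1 / 2)) :
    PiMeasure α =
      (volume.restrict (Icc (-1) 1)).withDensity fun u => ENNReal.ofReal (piDensity α u) :=
  if_neg hα

theorem ae_piMeasure_mem_Icc (α : ℝ) : ∀ᵐ u ∂PiMeasure α, u ∈ Icc (-1 : ℝ) 1 := by
  by_cases hα : α = -(1 / 2)
  · rw [PiMeasure, if_pos hα]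
    refine Measure.ae_smul_measure (ae_add_measure_iff.2 ⟨?_, ?_⟩) _ <;>
      simp [ae_dirac_eq]
  · rw [piMeasure_eq_withDensity hα]
    exact (withDensity_absolutelyContinuous _ _).ae_le (ae_restrict_mem measurableSet_Icc)

theorem integral_piMeasure (hα : -(1 / 2) < α) (f : ℝ → ℝ) :
    ∫ u, f u ∂PiMeasure α = ∫ u in Icc (-1 : ℝ) 1, piDensity α u * f u := by
  rw [piMeasure_eq_withDensity hα.ne', integral_withDensity_eq_integral_toReal_smul
    (measurable_piDensity α).ennreal_ofReal (ae_of_all _ fun _ => ENNReal.ofReal_lt_top)]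
  refine setIntegral_congr_fun measurableSet_Icc fun u hu => ?_
  simp only [ENNReal.toReal_ofReal (piDensity_nonneg hα hu), smul_eq_mul]

theorem integrable_piMeasure_of_continuousOn (hα : 1 / 2 ≤ α) {f : ℝ → ℝ}
    (hf : ContinuousOn f (Icc (-1) 1)) : Integrable f (PiMeasure α) := by
  have hα' : -(1 / 2) < α := by linarith
  rw [piMeasure_eq_withDensity hα'.ne', integrable_withDensity_iff_integrable_smul'
    (measurable_piDensity α).ennreal_ofReal (ae_of_all _ fun _ => ENNReal.ofReal_lt_top)]
  refine IntegrableOn.congr_fun ((continuous_piDensity hα).continuousOn.mul hf).integrableOn_Icc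
    (fun u hu => ?_) measurableSet_Icc
  simp only [ENNReal.toReal_ofReal (piDensity_nonneg hα' hu), smul_eq_mul, Pi.mul_apply]

theorem mul_integral_piMeasure_rpow_neg_le {a D p : ℝ} (hα : 1 / 2 ≤ α) (ha : 0 ≤ a)
    (hD : 0 < D) (hp : 1 < p) :
    a * ∫ u, (D + a * (1 - u)) ^ (-(α - 1 / 2 + p)) ∂PiMeasure α
      ≤ piConst α * 2 ^ (α - 1 / 2) / (p - 1) * ((a + D) ^ (-(α - 1 / 2)) * D ^ (1 - p)) := by
  set s := α - 1 / 2 with hs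
  have hs0 : 0 ≤ s := sub_nonneg.2 hα
  have hα' : -(1 / 2) < α := by linarith
  have hk := (piConst_pos hα').le
  have integrand_le : ∀ u ∈ Icc (-1 : ℝ) 1, piDensity α u * (D + a * (1 - u)) ^ (-(s + p))
      ≤ piConst α * (2 ^ s * (a + D) ^ (-s)) * (D + a * (1 - u)) ^ (-p) := by
    intro u hu
    have hE := add_mul_one_sub_pos ha hD hu
    calc piDensity α u * (D + a * (1 - u)) ^ (-(s + p))
        = piConst α * ((1 - u ^ 2) ^ s * (D + a * (1 - u)) ^ (-s))
            * (D + a * (1 - u)) ^ (-p) := by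
          rw [piDensity, ← hs, neg_add, rpow_add hE]; ring
      _ ≤ piConst α * (2 ^ s * (a + D) ^ (-s)) * (D + a * (1 - u)) ^ (-p) := by
          gcongr piConst α * ?_ * _
          exact one_sub_sq_rpow_mul_rpow_neg_le ha hD hs0 hu
  calc a * ∫ u, (D + a * (1 - u)) ^ (-(s + p)) ∂PiMeasure α
      ≤ a * ∫ u in Icc (-1 : ℝ) 1,
          piConst α * (2 ^ s * (a + D) ^ (-s)) * (D + a * (1 - u)) ^ (-p) := by
        rw [integral_piMeasure hα']
        have hcont := continuousOn_add_mul_one_sub_rpow ha hD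
        refine mul_le_mul_of_nonneg_left ?_ ha
        exact setIntegral_mono_on
          ((continuous_piDensity hα).continuousOn.mul (hcont _)).integrableOn_Icc
          (continuousOn_const.mul (hcont _)).integrableOn_Icc measurableSet_Icc integrand_le
    _ = piConst α * (2 ^ s * (a + D) ^ (-s))
          * (a * ∫ u in Icc (-1 : ℝ) 1, (D + a * (1 - u)) ^ (-p)) := by
        rw [integral_const_mul]; ring
    _ ≤ piConst α * (2 ^ s * (a + D) ^ (-s)) * (D ^ (1 - p) / (p - 1)) := by
        gcongr
        exact mul_integral_add_mul_one_sub_rpow_neg_le ha hD hp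
    _ = piConst α * 2 ^ s / (p - 1) * ((a + D) ^ (-s) * D ^ (1 - p)) := by ring

theorem integral_integral_piMeasure_le_mul {β a b D p s : ℝ} (hα : 1 / 2 ≤ α) (hβ : 1 / 2 ≤ β)
    (ha : 0 ≤ a) (hb : 0 ≤ b) (hD : 0 < D) (hp : 0 ≤ p) (hs : 0 ≤ s) :
    ∫ u, ∫ v, 1 / (D + a * (1 - u) + b * (1 - v)) ^ (p + s) ∂PiMeasure β ∂PiMeasure α
      ≤ (∫ u, (D + a * (1 - u)) ^ (-p) ∂PiMeasure α)
        * ∫ v, (D + b * (1 - v)) ^ (-s) ∂PiMeasure β := by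
  refine integral_integral_le_mul_of_le_mul ?_ ?_
    (integrable_piMeasure_of_continuousOn hα (continuousOn_add_mul_one_sub_rpow ha hD _))
    (integrable_piMeasure_of_continuousOn hβ (continuousOn_add_mul_one_sub_rpow hb hD _))
  all_goals
    filter_upwards [ae_piMeasure_mem_Icc α] with u hu
    filter_upwards [ae_piMeasure_mem_Icc β] with v hv
  · have := add_mul_one_sub_pos hb (add_mul_one_sub_pos ha hD hu) hv
    positivity
  · exact one_div_rpow_add_le_mul ha hb hD hp hs hu hv

theorem mul_integral_integral_piMeasure_le {β a b D : ℝ} (hα : 1 / 2 ≤ α) (hβ : 1 / 2 ≤ β)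
    (ha : 0 ≤ a) (hb : 0 ≤ b) (hD : 0 < D) :
    a * b * ∫ u, ∫ v, 1 / (D + a * (1 - u) + b * (1 - v)) ^ (α + β + 2)
        ∂PiMeasure β ∂PiMeasure α
      ≤ piConst α * piConst β * 2 ^ (α + β + 1)
        * ((a + D) ^ (-(α - 1 / 2)) * (b + D) ^ (-(β - 1 / 2)) / D) := by
  set p := α - 1 / 2 + 3 / 2
  set s := β - 1 / 2 + 3 / 2
  have exponent_eq : α + β + 2 = p + s := by ring
  have integral_nonneg : 0 ≤ ∫ v, (D + b * (1 - v)) ^ (-s) ∂PiMeasure β := by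
    refine integral_nonneg_of_ae ((ae_piMeasure_mem_Icc β).mono fun v hv => ?_)
    exact rpow_nonneg (add_mul_one_sub_pos hb hD hv).le _
  have hkα := piConst_pos (α := α) (by linarith)
  have two_pow : (2 : ℝ) ^ (α + β + 1) = 2 ^ (α - 1 / 2) * 2 ^ (β - 1 / 2) * 2 ^ 2 := by
    rw [← rpow_add two_pos, ← rpow_add_natCast two_ne_zero]
    congr 1
    push_cast
    ring
  have inv_D : D⁻¹ = D ^ (1 - 3 / 2 : ℝ) * D ^ (1 - 3 / 2 : ℝ) := by
    rw [← rpow_add hD, ← rpow_neg_one]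
    norm_num
  calc _ ≤ a * b * ((∫ u, (D + a * (1 - u)) ^ (-p) ∂PiMeasure α)
        * ∫ v, (D + b * (1 - v)) ^ (-s) ∂PiMeasure β) := by
        rw [exponent_eq]
        gcongr
        exact integral_integral_piMeasure_le_mul hα hβ ha hb hD (by linarith) (by linarith)
    _ = (a * ∫ u, (D + a * (1 - u)) ^ (-p) ∂PiMeasure α)
        * (b * ∫ v, (D + b * (1 - v)) ^ (-s) ∂PiMeasure β) := by ring
    _ ≤ _ := mul_le_mul
        (mul_integral_piMeasure_rpow_neg_le (p := 3 / 2) hα ha hD (by norm_num))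
        (mul_integral_piMeasure_rpow_neg_le (p := 3 / 2) hβ hb hD (by norm_num))
        (by positivity) (by positivity)
    _ = _ := by
        rw [div_eq_mul_inv _ D, two_pow, inv_D]
        ring

end PiMeasure

section HalfAngles

variable {θ φ : ℝ}

theorem sin_half_pos (hθ : θ ∈ Ioo 0 π) : 0 < sin (θ / 2) :=
  sin_pos_of_pos_of_lt_pi (by linarith [hθ.1]) (by linarith [hθ.1, hθ.2])

theorem cos_half_pos (hθ : θ ∈ Ioo 0 π) : 0 < cos (θ / 2) :=
  cos_pos_of_mem_Ioo ⟨by linarith [hθ.1, pi_pos], by linarith [hθ.2]⟩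

theorem sin_half_le_add (θ φ : ℝ) : sin (θ / 2) ≤ sin (φ / 2) + |θ - φ| / 2 := by
  have := (le_abs_self _).trans (abs_sin_sub_sin_le (θ / 2) (φ / 2))
  rw [← sub_div, abs_div, abs_two] at this
  linarith

theorem cos_half_le_add (θ φ : ℝ) : cos (θ / 2) ≤ cos (φ / 2) + |θ - φ| / 2 := by
  have := (le_abs_self _).trans (abs_cos_sub_cos_le (θ / 2) (φ / 2))
  rw [← sub_div, abs_div, abs_two] at this
  linarith

theorem qfun_eq_add (θ φ u v : ℝ) :
    qfun θ φ u v = qfun θ φ 1 1 + sin (θ / 2) * sin (φ / 2) * (1 - u)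
      + cos (θ / 2) * cos (φ / 2) * (1 - v) := by
  unfold qfun
  ring

theorem qfun_one_one (θ φ : ℝ) : qfun θ φ 1 1 = 1 - cos ((θ - φ) / 2) := by
  rw [sub_div, cos_sub, qfun]
  ring

theorem sq_half_abs_sub_le (h : |θ - φ| ≤ 2 * π) : (|θ - φ| / 2) ^ 2 ≤ 5 * qfun θ φ 1 1 := by
  have hcos := cos_le_one_sub_mul_cos_sq (x := (θ - φ) / 2) (by
    rw [abs_div, abs_two]; linarith)
  have pi_sq_le : π ^ 2 ≤ 10 := by nlinarith only [pi_lt_d2, pi_pos]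
  calc (|θ - φ| / 2) ^ 2 = π ^ 2 / 2 * (2 / π ^ 2 * ((θ - φ) / 2) ^ 2) := by
        rw [div_pow, div_pow, sq_abs]; field_simp
    _ ≤ 10 / 2 * qfun θ φ 1 1 := by
        rw [qfun_one_one]; gcongr; linarith
    _ = 5 * qfun θ φ 1 1 := by norm_num

theorem abs_sub_le_two_pi (hθ : θ ∈ Ioo 0 π) (hφ : φ ∈ Ioo 0 π) : |θ - φ| ≤ 2 * π :=
  abs_le.2 ⟨by linarith [hθ.1, hφ.2, pi_pos], by linarith [hθ.2, hφ.1, pi_pos]⟩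

theorem qfun_one_one_pos (hθ : θ ∈ Ioo 0 π) (hφ : φ ∈ Ioo 0 π) (hne : θ ≠ φ) :
    0 < qfun θ φ 1 1 := by
  have : 0 < |θ - φ| := abs_pos.2 (sub_ne_zero.2 hne)
  have : 0 < (|θ - φ| / 2) ^ 2 := by positivity
  linarith [sq_half_abs_sub_le (abs_sub_le_two_pi hθ hφ)]

theorem qfun_one_one_le_one (hθ : θ ∈ Ioo 0 π) (hφ : φ ∈ Ioo 0 π) : qfun θ φ 1 1 ≤ 1 := by
  have := mul_pos (sin_half_pos hθ) (sin_half_pos hφ)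
  have := mul_pos (cos_half_pos hθ) (cos_half_pos hφ)
  unfold qfun
  linarith

end HalfAngles

section Balls

variable {α β θ φ r : ℝ}

/-- The size of `μ_{α,β}^+(B(θ,|θ-φ|))` up to constants, in terms of the quantities appearing in the
kernel; `qfun θ φ 1 1` stands for `|θ-φ|²`. -/
noncomputable def ballSize (α β θ φ : ℝ) : ℝ :=
  (sin (θ / 2) * sin (φ / 2) + qfun θ φ 1 1) ^ (α + 1 / 2)
    * (cos (θ / 2) * cos (φ / 2) + qfun θ φ 1 1) ^ (β + 1 / 2) * √(qfun θ φ 1 1)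

theorem ballSize_pos (hθ : θ ∈ Ioo 0 π) (hφ : φ ∈ Ioo 0 π) (hne : θ ≠ φ) :
    0 < ballSize α β θ φ := by
  have := sin_half_pos hθ
  have := sin_half_pos hφ
  have := cos_half_pos hθ
  have := cos_half_pos hφ
  have := qfun_one_one_pos hθ hφ hne
  unfold ballSize
  positivity

theorem jacobiMeasure_jacobiBall_ne_zero (α β : ℝ) (hθ : θ ∈ Ioo 0 π) (hr : 0 < r) :
    jacobiMeasure α β (jacobiBall θ r) ≠ 0 := by
  have density_ne_zero : ∀ᵐ ψ ∂volume.restrict (Ioo 0 π),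
      ENNReal.ofReal (sin (ψ / 2) ^ (2 * α + 1) * cos (ψ / 2) ^ (2 * β + 1)) ≠ 0 := by
    filter_upwards [ae_restrict_mem measurableSet_Ioo] with ψ hψ
    have := sin_half_pos hψ
    have := cos_half_pos hψ
    rw [ENNReal.ofReal_ne_zero_iff]
    positivity
  have volume_ne_zero : volume.restrict (Ioo 0 π) (jacobiBall θ r) ≠ 0 := by
    rw [jacobiBall, Measure.restrict_apply (measurableSet_Ioo.inter measurableSet_Ioo),
      inter_assoc, inter_self]
    refine ((isOpen_Ioo.inter isOpen_Ioo).measure_pos volume ⟨θ, ?_, hθ⟩).ne'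
    exact ⟨by linarith, by linarith⟩
  exact fun h => volume_ne_zero
    (withDensity_absolutelyContinuous' (by fun_prop) density_ne_zero h)

theorem jacobiMeasure_jacobiBall_le (hα : -(1 / 2) ≤ α) (hβ : -(1 / 2) ≤ β) (θ r : ℝ) :
    jacobiMeasure α β (jacobiBall θ r) ≤
      ENNReal.ofReal ((sin (θ / 2) + r / 2) ^ (2 * α + 1) * (cos (θ / 2) + r / 2) ^ (2 * β + 1))
        * ENNReal.ofReal (2 * r) := by
  have hm : MeasurableSet (jacobiBall θ r) := measurableSet_Ioo.inter measurableSet_Ioo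
  set M := (sin (θ / 2) + r / 2) ^ (2 * α + 1) * (cos (θ / 2) + r / 2) ^ (2 * β + 1)
  have density_le : ∀ ψ ∈ jacobiBall θ r,
      sin (ψ / 2) ^ (2 * α + 1) * cos (ψ / 2) ^ (2 * β + 1) ≤ M := by
    rintro ψ ⟨hψθ, hψ⟩
    have hs := (sin_half_pos hψ).le
    have hc := (cos_half_pos hψ).le
    have hdist : |ψ - θ| ≤ r := abs_le.2 ⟨by linarith [hψθ.1], by linarith [hψθ.2]⟩
    have hs' : sin (ψ / 2) ≤ sin (θ / 2) + r / 2 := by linarith [sin_half_le_add ψ θ]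
    have hc' : cos (ψ / 2) ≤ cos (θ / 2) + r / 2 := by linarith [cos_half_le_add ψ θ]
    refine mul_le_mul (rpow_le_rpow hs hs' (by linarith)) (rpow_le_rpow hc hc' (by linarith))
      (rpow_nonneg hc _) (rpow_nonneg (hs.trans hs') _)
  calc jacobiMeasure α β (jacobiBall θ r)
      ≤ ∫⁻ _ in jacobiBall θ r, ENNReal.ofReal M ∂volume.restrict (Ioo 0 π) := by
        rw [jacobiMeasure, withDensity_apply _ hm]
        exact setLIntegral_mono' hm fun ψ hψ => ENNReal.ofReal_le_ofReal (density_le ψ hψ)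
    _ ≤ ENNReal.ofReal M * volume (Ioo (θ - r) (θ + r)) := by
        rw [setLIntegral_const]
        gcongr ENNReal.ofReal M * ?_
        exact (Measure.restrict_apply_le _ _).trans (measure_mono inter_subset_left)
    _ = ENNReal.ofReal M * ENNReal.ofReal (2 * r) := by
        rw [Real.volume_Ioo, add_sub_sub_cancel, two_mul]

theorem jacobiMeasure_jacobiBall_toReal_pos (hα : -(1 / 2) ≤ α) (hβ : -(1 / 2) ≤ β)
    (hθ : θ ∈ Ioo 0 π) (hr : 0 < r) : 0 < (jacobiMeasure α β (jacobiBall θ r)).toReal :=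
  ENNReal.toReal_pos (jacobiMeasure_jacobiBall_ne_zero α β hθ hr) <|
    ne_top_of_le_ne_top (ENNReal.mul_ne_top ENNReal.ofReal_ne_top ENNReal.ofReal_ne_top)
      (jacobiMeasure_jacobiBall_le hα hβ θ r)

theorem add_sq_le_four_mul {x y ρ : ℝ} (hx : 0 ≤ x) (hxy : x ≤ y + ρ) :
    (x + ρ) ^ 2 ≤ 4 * (x * y + ρ ^ 2) := by
  nlinarith only [mul_le_mul_of_nonneg_left hxy hx, sq_nonneg (x - ρ)]

theorem add_rpow_le_of_sq_le {x y ρ δ p : ℝ} (hx : 0 ≤ x) (hy : 0 ≤ y) (hρ : 0 ≤ ρ)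
    (hxy : x ≤ y + ρ) (hρδ : ρ ^ 2 ≤ 5 * δ) (hp : -(1 / 2) ≤ p) :
    (x + ρ) ^ (2 * p + 1) ≤ 20 ^ (p + 1 / 2) * (x * y + δ) ^ (p + 1 / 2) := by
  have hxy0 : 0 ≤ x * y := mul_nonneg hx hy
  have hδ : 0 ≤ δ := by nlinarith only [sq_nonneg ρ, hρδ]
  calc (x + ρ) ^ (2 * p + 1) = ((x + ρ) ^ 2) ^ (p + 1 / 2) := by
        rw [← rpow_natCast_mul (by positivity)]; congr 1; push_cast; ring
    _ ≤ (20 * (x * y + δ)) ^ (p + 1 / 2) := by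
        gcongr
        · linarith
        · linarith [add_sq_le_four_mul hx hxy]
    _ = 20 ^ (p + 1 / 2) * (x * y + δ) ^ (p + 1 / 2) := mul_rpow (by norm_num) (by positivity)

theorem jacobiMeasure_jacobiBall_toReal_le_ballSize (hα : -(1 / 2) ≤ α) (hβ : -(1 / 2) ≤ β)
    (hθ : θ ∈ Ioo 0 π) (hφ : φ ∈ Ioo 0 π) :
    (jacobiMeasure α β (jacobiBall θ |θ - φ|)).toReal
      ≤ 12 * 20 ^ (α + 1 / 2) * 20 ^ (β + 1 / 2) * ballSize α β θ φ := by
  have hsθ := (sin_half_pos hθ).le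
  have hsφ := (sin_half_pos hφ).le
  have hcθ := (cos_half_pos hθ).le
  have hcφ := (cos_half_pos hφ).le
  set ρ := |θ - φ| / 2 with hρ
  set δ := qfun θ φ 1 1 with hδ
  have hρ0 : 0 ≤ ρ := by positivity
  have hρδ : ρ ^ 2 ≤ 5 * δ := sq_half_abs_sub_le (abs_sub_le_two_pi hθ hφ)
  have hδ0 : 0 ≤ δ := by nlinarith only [sq_nonneg ρ, hρδ]
  have ρ_le : ρ ≤ 3 * √δ :=
    le_of_sq_le_sq (by rw [mul_pow, sq_sqrt hδ0]; linarith) (by positivity)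
  have hμ := jacobiMeasure_jacobiBall_le hα hβ θ |θ - φ|
  rw [← hρ, ← ENNReal.ofReal_mul (by positivity)] at hμ
  calc (jacobiMeasure α β (jacobiBall θ |θ - φ|)).toReal
      ≤ (sin (θ / 2) + ρ) ^ (2 * α + 1) * (cos (θ / 2) + ρ) ^ (2 * β + 1) * (2 * |θ - φ|) :=
        ENNReal.toReal_le_of_le_ofReal (by positivity) hμ
    _ = (sin (θ / 2) + ρ) ^ (2 * α + 1) * (cos (θ / 2) + ρ) ^ (2 * β + 1) * (4 * ρ) := by
        rw [hρ]; ring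
    _ ≤ (20 ^ (α + 1 / 2) * (sin (θ / 2) * sin (φ / 2) + δ) ^ (α + 1 / 2))
          * (20 ^ (β + 1 / 2) * (cos (θ / 2) * cos (φ / 2) + δ) ^ (β + 1 / 2))
          * (4 * (3 * √δ)) := by
        gcongr
        · exact add_rpow_le_of_sq_le hsθ hsφ hρ0 (sin_half_le_add θ φ) hρδ hα
        · exact add_rpow_le_of_sq_le hcθ hcφ hρ0 (cos_half_le_add θ φ) hρδ hβ
    _ = 12 * 20 ^ (α + 1 / 2) * 20 ^ (β + 1 / 2) * ballSize α β θ φ := by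
        rw [ballSize, hδ]; ring

end Balls

section Kernel

variable {α β θ φ t : ℝ}

/-- The constant of the kernel estimate `htilde_le_div_ballSize`. -/
noncomputable def htildeConst (α β : ℝ) : ℝ :=
  2 ^ (-(α + 1 + (β + 1) + 2)) / (jacobiMeasure (α + 1) (β + 1) (Ioo 0 π)).toReal
    * (piConst (α + 1) * piConst (β + 1) * 2 ^ (α + 1 + (β + 1) + 1))

theorem htildeConst_nonneg (hα : -(1 / 2) ≤ α) (hβ : -(1 / 2) ≤ β) : 0 ≤ htildeConst α β := by
  have := piConst_pos (α := α + 1) (by linarith)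
  have := piConst_pos (α := β + 1) (by linarith)
  unfold htildeConst
  positivity

theorem htilde_eq (α β t θ φ : ℝ) :
    Htilde α β t θ φ =
      2 ^ (-(α + 1 + (β + 1) + 2)) / (jacobiMeasure (α + 1) (β + 1) (Ioo 0 π)).toReal
        * sinh (t / 2) * (sin (θ / 2) * sin (φ / 2) * (cos (θ / 2) * cos (φ / 2))
          * ∫ u, ∫ v, 1 / (cosh (t / 2) - 1 + qfun θ φ 1 1 + sin (θ / 2) * sin (φ / 2) * (1 - u)
              + cos (θ / 2) * cos (φ / 2) * (1 - v)) ^ (α + 1 + (β + 1) + 2)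
            ∂PiMeasure (β + 1) ∂PiMeasure (α + 1)) := by
  have sin_eq (x : ℝ) : sin x = 2 * sin (x / 2) * cos (x / 2) := by
    rw [← sin_two_mul, mul_div_cancel₀ x two_ne_zero]
  set δ := qfun θ φ 1 1 with hδ
  have denom_eq (u v : ℝ) : cosh (t / 2) - 1 + qfun θ φ u v = cosh (t / 2) - 1 + δ
      + sin (θ / 2) * sin (φ / 2) * (1 - u) + cos (θ / 2) * cos (φ / 2) * (1 - v) := by
    rw [qfun_eq_add, hδ]
    ring
  simp only [Htilde, Hker, denom_eq]
  rw [sin_eq θ, sin_eq φ]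
  ring

theorem htilde_le_div_ballSize (hα : -(1 / 2) ≤ α) (hβ : -(1 / 2) ≤ β) (hθ : θ ∈ Ioo 0 π)
    (hφ : φ ∈ Ioo 0 π) (hne : θ ≠ φ) (ht : 0 ≤ t) :
    Htilde α β t θ φ ≤ htildeConst α β / ballSize α β θ φ := by
  have ha := mul_pos (sin_half_pos hθ) (sin_half_pos hφ)
  have hb := mul_pos (cos_half_pos hθ) (cos_half_pos hφ)
  have hδ := qfun_one_one_pos hθ hφ hne
  have sinh_div_le := sinh_div_le_one_div_sqrt (t / 2) hδ (qfun_one_one_le_one hθ hφ)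
  have hC := htildeConst_nonneg hα hβ
  have : 0 ≤ sinh (t / 2) := sinh_nonneg_iff.2 (by linarith)
  rw [htilde_eq, ballSize]
  set δ := qfun θ φ 1 1
  set D := cosh (t / 2) - 1 + δ
  set a := sin (θ / 2) * sin (φ / 2)
  set b := cos (θ / 2) * cos (φ / 2)
  have hδD : δ ≤ D := by linarith [one_le_cosh (t / 2)]
  have hD0 : 0 < D := hδ.trans_le hδD
  have ha_le : (a + D) ^ (-(α + 1 / 2)) ≤ (a + δ) ^ (-(α + 1 / 2)) :=
    rpow_le_rpow_of_nonpos (by positivity) (by linarith) (by linarith)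
  have hb_le : (b + D) ^ (-(β + 1 / 2)) ≤ (b + δ) ^ (-(β + 1 / 2)) :=
    rpow_le_rpow_of_nonpos (by positivity) (by linarith) (by linarith)
  calc _ ≤ 2 ^ (-(α + 1 + (β + 1) + 2))
          / (jacobiMeasure (α + 1) (β + 1) (Ioo 0 π)).toReal * sinh (t / 2)
          * (piConst (α + 1) * piConst (β + 1) * 2 ^ (α + 1 + (β + 1) + 1)
            * ((a + D) ^ (-(α + 1 - 1 / 2)) * (b + D) ^ (-(β + 1 - 1 / 2)) / D)) := by
        refine mul_le_mul_of_nonneg_left ?_ (by positivity)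
        exact mul_integral_integral_piMeasure_le (by linarith) (by linarith) ha.le hb.le hD0
    _ = htildeConst α β * ((a + D) ^ (-(α + 1 / 2)) * (b + D) ^ (-(β + 1 / 2))
          * (sinh (t / 2) / D)) := by
        rw [htildeConst, show α + 1 - 1 / 2 = α + 1 / 2 by ring,
          show β + 1 - 1 / 2 = β + 1 / 2 by ring]
        ring
    _ ≤ htildeConst α β * ((a + δ) ^ (-(α + 1 / 2)) * (b + δ) ^ (-(β + 1 / 2))
          * (1 / √δ)) := by gcongr
    _ = _ := by
        rw [rpow_neg (by positivity), rpow_neg (by positivity)]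
        field_simp

end Kernel

/-- growth estimate for the symmetrized kernel `H̃_t^{α,β}`. -/
theorem Htilde_growth (α β : ℝ) (hα : -(1 / 2) ≤ α) (hβ : -(1 / 2) ≤ β) :
    ∃ C : ℝ, 0 < C ∧
      ∀ θ ∈ Ioo (0 : ℝ) π, ∀ φ ∈ Ioo (0 : ℝ) π, θ ≠ φ →
        ∀ t : ℝ, 0 < t →
          Htilde α β t θ φ
            ≤ C / (jacobiMeasure α β (jacobiBall θ |θ - φ|)).toReal := by
  set K : ℝ := 12 * 20 ^ (α + 1 / 2) * 20 ^ (β + 1 / 2)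
  have hC := htildeConst_nonneg hα hβ
  refine ⟨htildeConst α β * K + 1, by positivity, fun θ hθ φ hφ hne t ht => ?_⟩
  have hS : 0 < ballSize α β θ φ := ballSize_pos hθ hφ hne
  have hμ := jacobiMeasure_jacobiBall_toReal_pos hα hβ hθ (abs_pos.2 (sub_ne_zero.2 hne))
  have hμS := jacobiMeasure_jacobiBall_toReal_le_ballSize hα hβ hθ hφ
  calc Htilde α β t θ φ ≤ htildeConst α β / ballSize α β θ φ :=
        htilde_le_div_ballSize hα hβ hθ hφ hne ht.le
    _ ≤ htildeConst α β * K / (jacobiMeasure α β (jacobiBall θ |θ - φ|)).toReal := by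
        rw [div_le_div_iff₀ hS hμ, mul_assoc]
        gcongr
    _ ≤ (htildeConst α β * K + 1) / (jacobiMeasure α β (jacobiBall θ |θ - φ|)).toReal := by
        gcongr
        linarith
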